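/- For every integer r ≥ 1, the group homomorphism P_r : M_{r,∞} → ℤ₂^× is surjective; consequently the quotient group M_{r,∞}/B_{r,∞} is isomorphic to ℤ₂^×. -/

import Mathlib

/-- Nodes of the infinite binary rooted tree `T_∞` are finite words over `{a,b}`,
encoded as `List Bool` with `a = false` and `b = true`; children of `w` are
`w ++ [false]` and `w ++ [true]`. An automorphism of `T_∞`. -/
def IsTreeAut (σ : List Bool → List Bool) : Prop :=
  Function.Bijective σ ∧ (∀ w, (σ w).length = w.length) ∧
    ∀ w s, ∃ t, σ (w ++ [s]) = σ w ++ [t]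

/-- The parity `Par(σ,x) ∈ {0,1}`: `0` if `σ(xa) = σ(x)a`, and `1` otherwise. -/
def par (σ : List Bool → List Bool) (x : List Bool) : ℕ :=
  if σ (x ++ [false]) = σ x ++ [false] then 0 else 1

/-- `W(r,i)`: the words `s₁ ⋯ s_{ri−1}` of length `r*i − 1` over `{a,b}` with
`s_j = a` whenever `r ∣ j`. -/
noncomputable def Wset (r i : ℕ) : Finset (List Bool) :=
  ((Finset.univ : Finset (Fin (r*i-1) → Bool)).filter
    (fun s => ∀ j : Fin (r*i-1), r ∣ (j:ℕ)+1 → s j = false)).image List.ofFn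

/-- `Q_r(σ,x) := Σ_{i≥1} 2^i Σ_{w ∈ W(r,i)} Par(σ, xw)` in `ℤ₂`. -/
noncomputable def Qr (r : ℕ) (σ : List Bool → List Bool) (x : List Bool) : ℤ_[2] :=
  ∑' i : ℕ, (2:ℤ_[2])^(i+1) * ∑ w ∈ Wset r (i+1), (par σ (x ++ w) : ℤ_[2])

/-- `P_r(σ,x) := (−1)^{Par(σ,x)} + Q_r(σ,xb) − Q_r(σ,xa)` in `ℤ₂`. -/
noncomputable def Pr (r : ℕ) (σ : List Bool → List Bool) (x : List Bool) : ℤ_[2] :=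
  (-1:ℤ_[2])^(par σ x) + Qr r σ (x ++ [true]) - Qr r σ (x ++ [false])

/-- `M_{r,∞}`: tree automorphisms for which `P_r(σ,·)` is constant. -/
def Mset (r : ℕ) : Set (List Bool → List Bool) :=
  {σ | IsTreeAut σ ∧ ∀ x₁ x₂ : List Bool, Pr r σ x₁ = Pr r σ x₂}

/-- `B_{r,∞}`: elements of `M_{r,∞}` with common value `P_r(σ) = 1`. -/
def Bset (r : ℕ) : Set (List Bool → List Bool) :=
  {σ | σ ∈ Mset r ∧ Pr r σ [] = 1}

theorem mem_Wset' (r i : ℕ) (w : List Bool) :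
    w ∈ Wset r i ↔ w.length = r*i-1 ∧ ∀ j (h : j < w.length), r ∣ j+1 → w[j] = false := by
  unfold Wset
  simp only [Finset.mem_image, Finset.mem_filter, Finset.mem_univ, true_and]
  constructor
  · rintro ⟨s, hs, rfl⟩
    refine ⟨by simp, ?_⟩
    intro j h hd
    rw [List.getElem_ofFn]
    exact hs _ hd
  · rintro ⟨hl, h⟩
    refine ⟨fun j => w[(j:ℕ)]'(by have := j.2; omega), ?_, ?_⟩
    · intro j hd
      exact h _ _ hd
    · apply List.ext_getElem
      · simp [hl]
      · intro n h1 h2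
        simp

theorem mem_Wset_one (r : ℕ) (hr : 1 ≤ r) (w : List Bool) :
    w ∈ Wset r 1 ↔ w.length = r - 1 := by
  rw [mem_Wset', mul_one]
  constructor
  · exact fun h => h.1
  · intro h
    refine ⟨h, fun j hj hd => ?_⟩
    have := Nat.le_of_dvd (by omega) hd
    omega

theorem sum_Wset_succ (r : ℕ) (hr : 1 ≤ r) (i : ℕ) (f : List Bool → ℤ_[2]) :
    ∑ w ∈ Wset r (i+1+1), f w
      = ∑ u ∈ Wset r 1, ∑ w ∈ Wset r (i+1), f (u ++ [false] ++ w) := by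
  rw [← Finset.sum_product']
  symm
  have e1 : r * (i+1+1) - 1 = r * (i+1) + r - 1 := by ring_nf
  have e2 : r ≤ r * (i+1) := Nat.le_mul_of_pos_right r (by omega)
  refine Finset.sum_nbij' (fun p => p.1 ++ [false] ++ p.2) (fun w => (w.take (r-1), w.drop r))
    ?_ ?_ ?_ ?_ ?_
  · rintro ⟨u, w⟩ h
    rw [Finset.mem_product, mem_Wset_one r hr, mem_Wset'] at h
    obtain ⟨h1, h2, h3⟩ := h
    simp only at h1 h2 h3 ⊢
    rw [mem_Wset', e1]
    refine ⟨by simp; omega, ?_⟩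
    intro j hj hd
    rw [List.getElem_append]
    split_ifs with hc
    · have := Nat.le_of_dvd (by omega) hd
      simp at hc
      rw [List.getElem_append_right (by omega)]
      simp
    · apply h3
      simp at hc
      have : (u ++ [false]).length = r := by simp; omega
      rw [this]
      have : j - r + 1 = j + 1 - r := by omega
      rw [this]
      exact Nat.dvd_sub hd dvd_rfl
  · intro w h
    rw [mem_Wset', e1] at h
    rw [Finset.mem_product, mem_Wset_one r hr, mem_Wset']
    obtain ⟨h1, h2⟩ := h
    refine ⟨by simp; omega, by simp; omega, ?_⟩
    intro j hj hd
    simp only [List.getElem_drop]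
    apply h2
    rw [add_assoc]
    exact Dvd.dvd.add dvd_rfl hd
  · rintro ⟨u, w⟩ h
    rw [Finset.mem_product, mem_Wset_one r hr, mem_Wset'] at h
    obtain ⟨h1, h2, h3⟩ := h
    simp only at h1 h2 h3 ⊢
    have : (u ++ [false]).length = r := by simp; omega
    rw [List.drop_left' this, List.append_assoc, List.take_left' h1]
  · intro w h
    rw [mem_Wset', e1] at h
    obtain ⟨h1, h2⟩ := h
    have h3 : w[r-1]'(by omega) = false := h2 _ _ (by rw [Nat.sub_add_cancel hr])
    have h4 := List.take_append_getElem (l := w) (i := r-1) (by omega)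
    rw [h3, Nat.sub_add_cancel hr] at h4
    simp only
    rw [h4, List.take_append_drop]
  · intro p _
    rfl

theorem norm_two_pow_mul_le (n : ℕ) (z : ℤ_[2]) : ‖(2:ℤ_[2])^n * z‖ ≤ (1/2:ℝ)^n := by
  have h2 : ‖(2:ℤ_[2])‖ = 1/2 := by
    have := PadicInt.norm_p (p := 2)
    simpa using this
  rw [norm_mul, norm_pow, h2]
  have := PadicInt.norm_le_one z
  have h3 : (0:ℝ) ≤ (1/2:ℝ)^n := by positivity
  nlinarith

theorem Qr_summable (r : ℕ) (σ : List Bool → List Bool) (x : List Bool) :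
    Summable (fun i : ℕ => (2:ℤ_[2])^(i+1) * ∑ w ∈ Wset r (i+1), (par σ (x ++ w) : ℤ_[2])) := by
  refine Summable.of_norm_bounded (g := fun i : ℕ => (1/2:ℝ)^(i+1)) ?_ ?_
  · exact (summable_nat_add_iff 1).2 (summable_geometric_of_lt_one (by norm_num) (by norm_num))
  · intro i
    exact norm_two_pow_mul_le _ _

theorem Qr_rec (r : ℕ) (hr : 1 ≤ r) (σ : List Bool → List Bool) (x : List Bool) :
    Qr r σ x = 2 * ∑ u ∈ Wset r 1, ((par σ (x ++ u) : ℤ_[2]) + Qr r σ (x ++ u ++ [false])) := by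
  have h := (Qr_summable r σ x).tsum_eq_zero_add
  unfold Qr
  rw [h, Finset.sum_add_distrib, mul_add]
  refine congrArg₂ (· + ·) ?_ ?_
  · simp
  · rw [← Summable.tsum_finsetSum (fun u _ => Qr_summable r σ _), ← Summable.tsum_mul_left]
    · refine tsum_congr fun i => ?_
      rw [sum_Wset_succ r hr, ← Finset.mul_sum, pow_succ _ (i+1)]
      simp only [List.append_assoc]
      ring
    · exact summable_sum (fun u _ => Qr_summable r σ _)

theorem eq_zero_of_rec (r : ℕ) (D : List Bool → ℤ_[2])
    (h : ∀ x, D x = 2 * ∑ u ∈ Wset r 1, D (x ++ u ++ [false])) (x : List Bool) : D x = 0 := by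
  have key : ∀ n : ℕ, ∀ x, (2:ℤ_[2])^n ∣ D x := by
    intro n
    induction n with
    | zero => intro x; simp
    | succ n ih =>
      intro x
      rw [h x, pow_succ']
      exact mul_dvd_mul_left _ (Finset.dvd_sum fun u _ => ih _)
  have hn : ∀ n : ℕ, ‖D x‖ ≤ (1/2:ℝ)^n := by
    intro n
    obtain ⟨e, he⟩ := key n x
    rw [he]
    exact norm_two_pow_mul_le _ _
  have ht := tendsto_pow_atTop_nhds_zero_of_lt_one (r := (1/2:ℝ)) (by norm_num) (by norm_num)
  have := ge_of_tendsto' ht hn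
  exact norm_le_zero_iff.1 this

theorem aut_snoc {σ : List Bool → List Bool} (h : IsTreeAut σ) (x : List Bool) :
    (par σ x = 0 ∧ σ (x ++ [false]) = σ x ++ [false] ∧ σ (x ++ [true]) = σ x ++ [true]) ∨
    (par σ x = 1 ∧ σ (x ++ [false]) = σ x ++ [true] ∧ σ (x ++ [true]) = σ x ++ [false]) := by
  obtain ⟨s, hs⟩ := h.2.2 x false
  obtain ⟨t, ht⟩ := h.2.2 x true
  have hne : s ≠ t := by
    rintro rfl
    have := h.1.1 (hs.trans ht.symm)
    simp at this
  unfold par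
  rw [hs, ht]
  cases s <;> cases t <;> simp_all

theorem aut_append {σ : List Bool → List Bool} (h : IsTreeAut σ) (x u : List Bool) :
    ∃ t, t.length = u.length ∧ σ (x ++ u) = σ x ++ t := by
  induction u using List.reverseRecOn with
  | nil => exact ⟨[], by simp⟩
  | append_singleton u s ih =>
    obtain ⟨t, h1, h2⟩ := ih
    obtain ⟨s', hs⟩ := h.2.2 (x ++ u) s
    refine ⟨t ++ [s'], by simp [h1], ?_⟩
    rw [← List.append_assoc, hs, h2, List.append_assoc]

theorem aut_sum (r : ℕ) (hr : 1 ≤ r) {σ : List Bool → List Bool} (h : IsTreeAut σ) (x : List Bool)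
    (f : List Bool → ℤ_[2]) :
    ∑ u ∈ Wset r 1, f (σ (x ++ u)) = ∑ u ∈ Wset r 1, f (σ x ++ u) := by
  choose t ht1 ht2 using aut_append h x
  have hmap : Set.MapsTo t (Wset r 1 : Set (List Bool)) (Wset r 1 : Set (List Bool)) := by
    intro u hu
    rw [Finset.mem_coe, mem_Wset_one r hr] at hu ⊢
    rw [ht1, hu]
  have hinj : Set.InjOn t (Wset r 1 : Set (List Bool)) := by
    intro u _ v _ huv
    have h1 : σ (x ++ u) = σ (x ++ v) := by rw [ht2, ht2, huv]
    exact List.append_cancel_left (h.1.1 h1)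
  refine Finset.sum_nbij t hmap hinj ?_ ?_
  · exact Finset.surjOn_of_injOn_of_card_le t hmap hinj le_rfl
  · intro u _
    rw [ht2]

theorem aut_comp {σ τ : List Bool → List Bool} (hτ : IsTreeAut τ) (hσ : IsTreeAut σ) :
    IsTreeAut (τ ∘ σ) := by
  refine ⟨hτ.1.comp hσ.1, fun w => by simp [hτ.2.1, hσ.2.1], fun w s => ?_⟩
  obtain ⟨t, ht⟩ := hσ.2.2 w s
  obtain ⟨t', ht'⟩ := hτ.2.2 (σ w) t
  exact ⟨t', by simp [ht, ht']⟩

/-- A left quotient of tree automorphisms is a tree automorphism. -/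
theorem aut_div {σ τ : List Bool → List Bool} (hτ : IsTreeAut τ) (hσ : IsTreeAut σ) :
    ∃ β, IsTreeAut β ∧ σ = τ ∘ β := by
  obtain ⟨ρ, hl, hrr⟩ := Function.bijective_iff_has_inverse.1 hτ.1
  have hρlen : ∀ w, (ρ w).length = w.length := fun w => by rw [← hτ.2.1, hrr]
  have hρ : IsTreeAut ρ := by
    refine ⟨Function.bijective_iff_has_inverse.2 ⟨τ, hrr, hl⟩, hρlen, fun w s => ?_⟩
    rcases aut_snoc hτ (ρ w) with ⟨-, h1, h2⟩ | ⟨-, h1, h2⟩ <;> rw [hrr] at h1 h2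
    · exact ⟨s, by cases s <;> simp [← h1, ← h2, hl _]⟩
    · exact ⟨!s, by cases s <;> simp [← h1, ← h2, hl _]⟩
  refine ⟨ρ ∘ σ, aut_comp hρ hσ, ?_⟩
  funext w
  exact (hrr _).symm

theorem par_comp {σ τ : List Bool → List Bool} (hτ : IsTreeAut τ) (hσ : IsTreeAut σ)
    (x : List Bool) : (par (τ ∘ σ) x : ℤ_[2])
      = par σ x + par τ (σ x) - 2 * par σ x * par τ (σ x) := by
  have : par (τ ∘ σ) x = if τ (σ (x ++ [false])) = τ (σ x) ++ [false] then 0 else 1 := rfl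
  rw [this]
  rcases aut_snoc hσ x with ⟨h0, h1, h2⟩ | ⟨h0, h1, h2⟩ <;>
  rcases aut_snoc hτ (σ x) with ⟨k0, k1, k2⟩ | ⟨k0, k1, k2⟩ <;>
  simp [h0, h1, h2, k0, k1, k2] <;> norm_num

theorem Qr_comp (r : ℕ) (hr : 1 ≤ r) {σ τ : List Bool → List Bool} (hτ : IsTreeAut τ)
    (hσ : IsTreeAut σ) (P : ℤ_[2]) (hP : ∀ x, Pr r τ x = P) (x : List Bool) :
    Qr r (τ ∘ σ) x = P * Qr r σ x + Qr r τ (σ x) := by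
  have key := eq_zero_of_rec r
    (fun x => Qr r (τ ∘ σ) x - (P * Qr r σ x + Qr r τ (σ x))) ?_ x
  · exact sub_eq_zero.1 key
  clear x
  intro x
  have e := aut_sum r hr hσ x (fun y => (par τ y : ℤ_[2]) + Qr r τ (y ++ [false]))
  rw [Qr_rec r hr (τ ∘ σ) x, Qr_rec r hr σ x, Qr_rec r hr τ (σ x), ← e, mul_left_comm, ← mul_add,
    ← mul_sub, Finset.mul_sum, ← Finset.sum_add_distrib, ← Finset.sum_sub_distrib]
  congr 1
  refine Finset.sum_congr rfl fun u _ => ?_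
  rw [par_comp hτ hσ]
  have hPy := hP (σ (x ++ u))
  unfold Pr at hPy
  rcases aut_snoc hσ (x ++ u) with ⟨h0, h1, h2⟩ | ⟨h0, h1, h2⟩ <;>
  rcases aut_snoc hτ (σ (x ++ u)) with ⟨k0, k1, k2⟩ | ⟨k0, k1, k2⟩ <;>
  rw [h0, k0, h1] <;> rw [k0] at hPy <;> rw [← hPy] <;> push_cast <;> ring

theorem Pr_comp (r : ℕ) (hr : 1 ≤ r) {σ τ : List Bool → List Bool} (hτ : IsTreeAut τ)
    (hσ : IsTreeAut σ) (P : ℤ_[2]) (hP : ∀ x, Pr r τ x = P) (x : List Bool) :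
    Pr r (τ ∘ σ) x = P * Pr r σ x := by
  have hPy := hP (σ x)
  have hpar := par_comp hτ hσ x
  unfold Pr at hPy ⊢
  rw [Qr_comp r hr hτ hσ P hP, Qr_comp r hr hτ hσ P hP]
  have hm : ((-1:ℤ_[2]))^(par (τ ∘ σ) x) = 1 - 2 * (par (τ ∘ σ) x : ℤ_[2]) := by
    rcases aut_snoc (aut_comp hτ hσ) x with ⟨h0, -⟩ | ⟨h0, -⟩ <;> rw [h0] <;> norm_num
  rw [hm, hpar]
  rcases aut_snoc hσ x with ⟨h0, h1, h2⟩ | ⟨h0, h1, h2⟩ <;>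
  rcases aut_snoc hτ (σ x) with ⟨k0, k1, k2⟩ | ⟨k0, k1, k2⟩ <;>
  rw [h0, k0, h1, h2] <;> rw [k0] at hPy <;> rw [← hPy] <;> push_cast <;> ring

theorem padic_half (z : ℤ_[2]) : ∃ (p : Bool) (z' : ℤ_[2]),
    z = (if p then 1 else 0) + 2 * z' := by
  obtain ⟨n, hn, hz⟩ := PadicInt.exists_mem_range (p := 2) z
  rw [PadicInt.maximalIdeal_eq_span_p, Ideal.mem_span_singleton] at hz
  obtain ⟨z', hz'⟩ := hz
  have hn2 : n < 2 := hn
  refine ⟨n == 1, z', ?_⟩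
  have : z = n + 2 * z' := by
    have : z - n = 2 * z' := by simpa using hz'
    rw [← this]; ring
  rw [this]
  interval_cases n <;> simp

theorem not_isUnit_two : ¬ IsUnit (2 : ℤ_[2]) := by
  have := PadicInt.prime_p (p := 2)
  have := this.not_isUnit
  simpa using this

theorem Pr_isUnit (r : ℕ) (hr : 1 ≤ r) {σ : List Bool → List Bool} (x : List Bool) :
    IsUnit (Pr r σ x) := by
  unfold Pr
  rw [Qr_rec r hr, Qr_rec r hr, add_sub_assoc, ← mul_sub]
  generalize (∑ u ∈ Wset r 1, ((par σ (x ++ [true] ++ u) : ℤ_[2]) + Qr r σ (x ++ [true] ++ u ++ [false])) - _) = z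
  by_contra hc
  have h1 : (-1:ℤ_[2])^(par σ x) + 2 * z ∈ IsLocalRing.maximalIdeal ℤ_[2] := hc
  have h2 : 2 * z ∈ IsLocalRing.maximalIdeal ℤ_[2] := Ideal.mul_mem_right _ _ not_isUnit_two
  have h3 := (Ideal.add_mem_iff_left _ h2).1 h1
  exact h3 ((isUnit_one.neg).pow _)

section construction

/-- Parity bit of a 2-adic integer. -/
noncomputable def bitZ (z : ℤ_[2]) : Bool := (padic_half z).choose

/-- The 2-adic integer `(z - bit) / 2`. -/
noncomputable def halfZ (z : ℤ_[2]) : ℤ_[2] := (padic_half z).choose_spec.choose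

theorem bitZ_halfZ (z : ℤ_[2]) : z = (if bitZ z then 1 else 0) + 2 * halfZ z :=
  (padic_half z).choose_spec.choose_spec

theorem bitZ_zero : bitZ 0 = false := by
  by_contra hb
  have hb : bitZ 0 = true := by simpa using hb
  have h := bitZ_halfZ 0
  rw [hb] at h
  apply not_isUnit_two
  refine IsUnit.of_mul_eq_one (-halfZ 0) ?_
  simp only [if_true] at h
  linear_combination h

theorem halfZ_zero : halfZ 0 = 0 := by
  have h := bitZ_halfZ 0
  rw [bitZ_zero] at h
  simpa using h

/-- The prescribed value of `Q / 2`, on reversed words. -/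
noncomputable def Srev (r : ℕ) (c : ℤ_[2]) : List Bool → ℤ_[2]
  | [] => 0
  | s :: t =>
    let R := if t.take (r-1) = List.replicate (r-1) false then Srev r c (t.drop (r-1)) else 0
    halfZ R + if s then c + (if bitZ R then 1 else 0) else 0
  termination_by t => t.length
  decreasing_by simp

/-- The prescribed value of `Par + Q(·a)`, on reversed words. -/
noncomputable def Rrev (r : ℕ) (c : ℤ_[2]) (t : List Bool) : ℤ_[2] :=
  if t.take (r-1) = List.replicate (r-1) false then Srev r c (t.drop (r-1)) else 0

theorem Srev_cons (r : ℕ) (c : ℤ_[2]) (s : Bool) (t : List Bool) :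
    Srev r c (s :: t) = halfZ (Rrev r c t) +
      if s then c + (if bitZ (Rrev r c t) then 1 else 0) else 0 := by
  rw [Srev]; rfl

/-- The tree automorphism with given labels, on reversed words. -/
def labRev (p : List Bool → Bool) : List Bool → List Bool
  | [] => []
  | s :: t => xor s (p t) :: labRev p t

theorem labRev_length (p : List Bool → Bool) (w : List Bool) : (labRev p w).length = w.length := by
  induction w with
  | nil => rfl
  | cons s t ih => simp [labRev, ih]

theorem labRev_bij (p : List Bool → Bool) : Function.Bijective (labRev p) := by
  constructor
  · intro v
    induction v with
    | nil =>
      intro w h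
      cases w with
      | nil => rfl
      | cons s t => simp [labRev] at h
    | cons s t ih =>
      intro w h
      cases w with
      | nil => simp [labRev] at h
      | cons s' t' =>
        simp only [labRev, List.cons.injEq] at h
        have := ih h.2
        subst this
        simpa using h.1
  · intro v
    induction v with
    | nil => exact ⟨[], rfl⟩
    | cons s t ih =>
      obtain ⟨t', rfl⟩ := ih
      exact ⟨xor s (p t') :: t', by simp [labRev]⟩

/-- The tree automorphism with given labels. -/
def labAut (p : List Bool → Bool) (w : List Bool) : List Bool := (labRev p w.reverse).reverse

theorem labAut_snoc (p : List Bool → Bool) (w : List Bool) (s : Bool) :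
    labAut p (w ++ [s]) = labAut p w ++ [xor s (p w.reverse)] := by
  simp [labAut, labRev]

theorem labAut_aut (p : List Bool → Bool) : IsTreeAut (labAut p) := by
  refine ⟨?_, fun w => by simp [labAut, labRev_length], fun w s => ⟨_, labAut_snoc p w s⟩⟩
  have : labAut p = List.reverse ∘ labRev p ∘ List.reverse := rfl
  rw [this]
  exact List.reverse_bijective.comp ((labRev_bij p).comp List.reverse_bijective)

theorem par_labAut (p : List Bool → Bool) (w : List Bool) :
    par (labAut p) w = if p w.reverse then 1 else 0 := by
  unfold par
  rw [labAut_snoc]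
  cases p w.reverse <;> simp

theorem Qr_constr (r : ℕ) (hr : 1 ≤ r) (c : ℤ_[2]) (x : List Bool) :
    Qr r (labAut fun t => bitZ (Rrev r c t)) x = 2 * Srev r c x.reverse := by
  set σ := labAut fun t => bitZ (Rrev r c t) with hσ
  have key := eq_zero_of_rec r (fun x => Qr r σ x - 2 * Srev r c x.reverse) ?_ x
  · exact sub_eq_zero.1 key
  clear x
  intro x
  have hS : Srev r c x.reverse = ∑ u ∈ Wset r 1, Rrev r c (x ++ u).reverse := by
    rw [Finset.sum_eq_single (List.replicate (r-1) false)]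
    · unfold Rrev
      simp [List.take_append, List.drop_append]
    · intro u hu hne
      rw [mem_Wset_one r hr] at hu
      unfold Rrev
      rw [if_neg]
      rw [List.reverse_append, List.take_left' (by simpa using hu)]
      intro h
      apply hne
      rw [← List.reverse_reverse u, h, List.reverse_replicate]
    · intro h
      exact absurd ((mem_Wset_one r hr _).2 (by simp)) h
  rw [Qr_rec r hr, hS, ← mul_sub, ← Finset.sum_sub_distrib]
  congr 1
  refine Finset.sum_congr rfl fun u _ => ?_
  have h1 := bitZ_halfZ (Rrev r c (x ++ u).reverse)
  have h2 : Srev r c (x ++ u ++ [false]).reverse = halfZ (Rrev r c (x ++ u).reverse) := by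
    rw [List.reverse_append (as := x ++ u)]
    simp only [List.reverse_singleton, List.singleton_append]
    rw [Srev_cons]
    simp
  rw [h2, hσ, par_labAut]
  push_cast
  linear_combination -h1

theorem Pr_constr (r : ℕ) (hr : 1 ≤ r) (c : ℤ_[2]) (x : List Bool) :
    Pr r (labAut fun t => bitZ (Rrev r c t)) x = 1 + 2 * c := by
  unfold Pr
  rw [Qr_constr r hr, Qr_constr r hr, par_labAut]
  simp only [List.reverse_append, List.reverse_singleton, List.singleton_append]
  rw [Srev_cons, Srev_cons]
  cases bitZ (Rrev r c x.reverse) <;> simp <;> ring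

end construction

theorem Pr_surj (r : ℕ) (hr : 1 ≤ r) (u : ℤ_[2]ˣ) : ∃ σ ∈ Mset r, Pr r σ [] = (u : ℤ_[2]) := by
  have h := bitZ_halfZ (u : ℤ_[2])
  have hb : bitZ (u : ℤ_[2]) = true := by
    by_contra hb
    have hb : bitZ (u : ℤ_[2]) = false := by simpa using hb
    rw [hb] at h
    apply not_isUnit_two
    have hu := u.isUnit
    rw [h] at hu
    simp only [Bool.false_eq_true, if_false, zero_add] at hu
    exact isUnit_of_mul_isUnit_left hu
  rw [hb] at h
  simp only [if_true] at h
  refine ⟨labAut fun t => bitZ (Rrev r (halfZ u) t), ⟨labAut_aut _, fun x₁ x₂ => ?_⟩, ?_⟩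
  · rw [Pr_constr r hr, Pr_constr r hr]
  · rw [Pr_constr r hr, ← h]

/-- For every `r ≥ 1`, the group homomorphism `P_r : M_{r,∞} → ℤ₂^×`
is surjective; consequently the quotient `M_{r,∞}/B_{r,∞}` (realized as the quotient of
`M_{r,∞}` by the coset relation `σ ~ τ ↔ ∃ β ∈ B_{r,∞}, σ = τ ∘ β`) is isomorphic to
`ℤ₂^×` via the map induced by `P_r`. -/
theorem Pr_surjective_and_quotient_iso (r : ℕ) (hr : 1 ≤ r) :
    (∀ u : ℤ_[2]ˣ, ∃ σ ∈ Mset r, Pr r σ [] = (u : ℤ_[2])) ∧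
    ∃ e : Quot (fun σ τ : {σ : List Bool → List Bool // σ ∈ Mset r} =>
        ∃ β ∈ Bset r, σ.1 = τ.1 ∘ β) ≃ ℤ_[2]ˣ,
      ∀ σ : {σ : List Bool → List Bool // σ ∈ Mset r},
        ((e (Quot.mk _ σ) : ℤ_[2]ˣ) : ℤ_[2]) = Pr r σ.1 [] := by
  refine ⟨Pr_surj r hr, ?_⟩
  let F : Quot (fun σ τ : {σ : List Bool → List Bool // σ ∈ Mset r} =>
        ∃ β ∈ Bset r, σ.1 = τ.1 ∘ β) → ℤ_[2]ˣ :=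
    Quot.lift (fun σ => (Pr_isUnit r hr (σ := σ.1) []).unit) (by
      rintro ⟨σ, hσ⟩ ⟨τ, hτ⟩ ⟨β, hβ, he⟩
      simp only at he
      subst he
      apply Units.ext
      simp only [IsUnit.unit_spec]
      rw [Pr_comp r hr hτ.1 hβ.1.1 (Pr r τ []) (fun x => hτ.2 _ _), hβ.2, mul_one])
  have hF : ∀ σ : {σ : List Bool → List Bool // σ ∈ Mset r},
      ((F (Quot.mk _ σ) : ℤ_[2]ˣ) : ℤ_[2]) = Pr r σ.1 [] := fun σ => rfl
  refine ⟨Equiv.ofBijective F ⟨?_, ?_⟩, hF⟩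
  · rintro ⟨⟨σ, hσ⟩⟩ ⟨⟨τ, hτ⟩⟩ h
    apply Quot.sound
    have h1 : Pr r σ [] = Pr r τ [] := congrArg (Units.val) h
    obtain ⟨β, hβ, rfl⟩ := aut_div hτ.1 hσ.1
    have h2 : ∀ x, Pr r β x = 1 := by
      intro x
      have h3 := Pr_comp r hr hτ.1 hβ (Pr r τ []) (fun x => hτ.2 _ _) x
      rw [hσ.2 x [], h1] at h3
      exact (Pr_isUnit r hr (σ := τ) []).mul_left_cancel (by rw [← h3, mul_one])
    exact ⟨β, ⟨⟨hβ, fun x₁ x₂ => by rw [h2, h2]⟩, h2 _⟩, rfl⟩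
  · intro u
    obtain ⟨σ, hσ, hu⟩ := Pr_surj r hr u
    exact ⟨Quot.mk _ ⟨σ, hσ⟩, Units.ext hu⟩
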